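/- For T ⊆ [n], the prime P_T(G) is a minimal prime of J_G if and only if T has the cutpoint property for G, i.e., if and only if T ∈ 𝒞(G). -/

import Mathlib

open MvPolynomial

noncomputable section

/-- The binomial edge ideal of a simple graph `G` on vertex type `V`, inside the
polynomial ring `K[x_i, y_i : i ∈ V]`, modelled as `MvPolynomial (V ⊕ V) K`
with `x_i = X (Sum.inl i)` and `y_i = X (Sum.inr i)`. -/
def binomialEdgeIdeal (K : Type*) [Field K] {V : Type*} (G : SimpleGraph V) :
    Ideal (MvPolynomial (V ⊕ V) K) :=
  Ideal.span { f | ∃ i j : V, G.Adj i j ∧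
    f = X (Sum.inl i) * X (Sum.inr j) - X (Sum.inl j) * X (Sum.inr i) }

/-- The minimal number of generators of an ideal. -/
def mu {R : Type*} [CommRing R] (J : Ideal R) : ℕ :=
  sInf {k | ∃ s : Finset R, s.card = k ∧ Ideal.span (s : Set R) = J}

/-- The height of an ideal: the infimum of the heights of the primes containing it. -/
def htI {R : Type*} [CommRing R] (I : Ideal R) : ℕ∞ :=
  ⨅ (P : PrimeSpectrum R) (_ : I ≤ P.asIdeal), Order.height P

/-- An ideal is unmixed if all of its minimal primes have height equal to its height. -/
def IsUnmixed {R : Type*} [CommRing R] (I : Ideal R) : Prop :=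
  ∀ P ∈ I.minimalPrimes, htI P = htI I

/-- The depth of a ring `R` with respect to an ideal `m`: the supremum of the
lengths of regular sequences on `R` consisting of elements of `m`. -/
def ringDepth (R : Type*) [CommRing R] (m : Ideal R) : ℕ∞ :=
  sSup {d : ℕ∞ | ∃ l : List R, (l.length : ℕ∞) = d ∧ (∀ x ∈ l, x ∈ m) ∧
    RingTheory.Sequence.IsRegular R l}

/-- The graded maximal ideal of the quotient of a polynomial ring by an ideal `J`:
the image of the ideal generated by all the variables. -/
def gradedMaxQuot {K σ : Type*} [Field K] (J : Ideal (MvPolynomial σ K)) :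
    Ideal (MvPolynomial σ K ⧸ J) :=
  (Ideal.span (Set.range (X : σ → MvPolynomial σ K))).map (Ideal.Quotient.mk J)

/-- `S/J` is Cohen–Macaulay: its depth with respect to the graded maximal ideal
equals its Krull dimension. -/
def IsCMQuot {K σ : Type*} [Field K] (J : Ideal (MvPolynomial σ K)) : Prop :=
  (ringDepth (MvPolynomial σ K ⧸ J) (gradedMaxQuot J) : WithBot ℕ∞) =
    ringKrullDim (MvPolynomial σ K ⧸ J)

/-- A graph is a path graph if its vertices can be ordered `v_1, …, v_m` so that
its edges are exactly `{v_i, v_{i+1}}` for `1 ≤ i ≤ m - 1`. -/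
def IsPathGraph {V : Type*} (H : SimpleGraph V) : Prop :=
  ∃ (m : ℕ) (e : V ≃ Fin m), ∀ a b : V,
    H.Adj a b ↔ ((e a : ℕ) + 1 = (e b : ℕ) ∨ (e b : ℕ) + 1 = (e a : ℕ))

/-- The vertex set of a connected component, as a set of vertices. -/
def compSupp {V : Type*} (G : SimpleGraph V) (c : G.ConnectedComponent) : Set V :=
  {v | G.connectedComponentMk v = c}

end

noncomputable section

/-- The prime `P_T(G)` associated with a subset `T` of the vertices: it is generated
by the variables `x_i, y_i` for `i ∈ T` together with the binomial edge ideals of the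
complete graphs on the connected components of the subgraph of `G` induced on the
complement of `T` (i.e. all `2`-minors `x_i y_j - x_j y_i` for distinct vertices
`i, j ∉ T` lying in the same connected component of that induced subgraph). -/
def PTIdeal (K : Type*) [Field K] {n : ℕ} (G : SimpleGraph (Fin n)) (T : Set (Fin n)) :
    Ideal (MvPolynomial (Fin n ⊕ Fin n) K) :=
  Ideal.span
    ({ f | ∃ i ∈ T, f = X (Sum.inl i) } ∪ { f | ∃ i ∈ T, f = X (Sum.inr i) } ∪
      { f | ∃ (i j : Fin n) (hi : i ∈ Tᶜ) (hj : j ∈ Tᶜ), i ≠ j ∧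
        (G.induce Tᶜ).Reachable ⟨i, hi⟩ ⟨j, hj⟩ ∧
        f = X (Sum.inl i) * X (Sum.inr j) - X (Sum.inl j) * X (Sum.inr i) })

/-- The number of connected components of the subgraph of `G` induced on `U`. -/
def cNum {n : ℕ} (G : SimpleGraph (Fin n)) (U : Set (Fin n)) : ℕ :=
  Nat.card (G.induce U).ConnectedComponent

/-- `T` has the cutpoint property for `G`: every `i ∈ T` is a cutpoint of the
subgraph of `G` induced on `([n] ∖ T) ∪ {i}`, i.e. removing `i` from that graph
increases the number of connected components. -/
def HasCutpointProperty {n : ℕ} (G : SimpleGraph (Fin n)) (T : Set (Fin n)) : Prop :=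
  ∀ i ∈ T, cNum G (Tᶜ ∪ {i}) < cNum G Tᶜ

section Toric

variable (K : Type*) [Field K] {V C : Type*}

open Classical in
/-- The parametrization `x_i ↦ z_i s_{c(i)}`, `y_i ↦ z_i t_{c(i)}` for `i ∉ T`, which sends
`x_i` and `y_i` to zero for `i ∈ T`. -/
def minorParam (T : Set V) (c : V → C) :
    MvPolynomial (V ⊕ V) K →ₐ[K] MvPolynomial (V ⊕ (C ⊕ C)) K :=
  aeval fun v => if Sum.elim id id v ∈ T then 0 else
    X (Sum.inl (Sum.elim id id v)) * X (Sum.inr (Sum.map c c v))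

variable {K}

lemma minorParam_X_of_mem {T : Set V} (c : V → C) {v : V ⊕ V} (hv : Sum.elim id id v ∈ T) :
    minorParam K T c (X v) = 0 := by
  simp [minorParam, hv]

lemma minorParam_X_of_notMem {T : Set V} (c : V → C) {v : V ⊕ V} (hv : Sum.elim id id v ∉ T) :
    minorParam K T c (X v) =
      X (Sum.inl (Sum.elim id id v)) * X (Sum.inr (Sum.map c c v)) := by
  simp [minorParam, hv]

lemma minorParam_X_eq_zero_iff {T : Set V} {c : V → C} {v : V ⊕ V} :
    minorParam K T c (X v) = 0 ↔ Sum.elim id id v ∈ T := by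
  by_cases hv : Sum.elim id id v ∈ T
  · simp [minorParam_X_of_mem c hv, hv]
  · simp [minorParam_X_of_notMem c hv, hv]

lemma minorParam_minor_eq_zero_iff {T : Set V} {c : V → C} {i j : V} (hi : i ∉ T) (hj : j ∉ T) :
    minorParam K T c (X (Sum.inl i) * X (Sum.inr j) - X (Sum.inl j) * X (Sum.inr i)) = 0 ↔
      c i = c j := by
  simp only [map_sub, map_mul]
  rw [minorParam_X_of_notMem c (v := Sum.inl i) (by simpa),
    minorParam_X_of_notMem c (v := Sum.inr i) (by simpa),
    minorParam_X_of_notMem c (v := Sum.inl j) (by simpa),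
    minorParam_X_of_notMem c (v := Sum.inr j) (by simpa)]
  simp only [Sum.elim_inl, Sum.elim_inr, Sum.map_inl, Sum.map_inr, id]
  refine ⟨fun h => ?_, fun h => by rw [h]; ring⟩
  by_contra hne
  classical
  have heval := congrArg (eval fun w : V ⊕ (C ⊕ C) =>
    if w = Sum.inr (Sum.inl (c j)) then (0 : K) else 1) h
  simp [hne] at heval

/-- An algebra map to a domain kills a monomial iff it kills one of its variables. -/
lemma algHom_monomial_eq_zero_iff {σ A : Type*} [CommRing A] [IsDomain A] [Algebra K A]
    (ψ : MvPolynomial σ K →ₐ[K] A) (p : σ →₀ ℕ) :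
    ψ (monomial p 1) = 0 ↔ ∃ v, p v ≠ 0 ∧ ψ (X v) = 0 := by
  rw [monomial_eq, C_1, one_mul, Finsupp.prod, map_prod, Finset.prod_eq_zero_iff]
  constructor
  · rintro ⟨v, hv, h⟩
    rw [map_pow] at h
    exact ⟨v, Finsupp.mem_support_iff.1 hv, eq_zero_of_pow_eq_zero h⟩
  · rintro ⟨v, hv, h⟩
    exact ⟨v, Finsupp.mem_support_iff.2 hv, by rw [map_pow, h, zero_pow hv]⟩

lemma monomial_eq_mul_X_of_ne_zero {σ : Type*} {p : σ →₀ ℕ} {v : σ} (hv : p v ≠ 0) :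
    (monomial p 1 : MvPolynomial σ K) = monomial (p - Finsupp.single v 1) 1 * X v := by
  classical
  rw [X, monomial_mul, one_mul, tsub_add_cancel_of_le]
  simpa [Finsupp.single_le_iff] using Nat.one_le_iff_ne_zero.2 hv

/-- The parametrization sends monomials to monomials or to zero. -/
lemma minorParam_monomial (T : Set V) (c : V → C) (p : V ⊕ V →₀ ℕ) :
    minorParam K T c (monomial p 1) = 0 ∨
      ∃ d, minorParam K T c (monomial p 1) = monomial d 1 := by
  induction p using Finsupp.induction_linear with
  | zero => exact Or.inr ⟨0, by simp⟩
  | add p q hp hq =>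
    have h : (monomial (p + q) 1 : MvPolynomial (V ⊕ V) K) = monomial p 1 * monomial q 1 := by
      rw [monomial_mul, one_mul]
    rw [h, map_mul]
    rcases hp with hp | ⟨d, hd⟩
    · simp [hp]
    rcases hq with hq | ⟨e, he⟩
    · simp [hq]
    exact Or.inr ⟨d + e, by rw [hd, he, monomial_mul, one_mul]⟩
  | single v k =>
    rw [← X_pow_eq_monomial, map_pow]
    by_cases hv : Sum.elim id id v ∈ T
    · rw [minorParam_X_of_mem c hv]
      rcases Nat.eq_zero_or_pos k with rfl | hk
      · exact Or.inr ⟨0, by simp⟩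
      · exact Or.inl (zero_pow hk.ne')
    · rw [minorParam_X_of_notMem c hv]
      exact Or.inr ⟨_, by rw [X, X, monomial_mul, monomial_pow, one_mul, one_pow]⟩

/-- If two monomials have the same image under the parametrization, then a substitution that kills
the image of a variable of the first kills the image of some variable of the second. -/
lemma exists_eval_minorParam_eq_zero {T : Set V} {c : V → C} {p q : V ⊕ V →₀ ℕ}
    (h : minorParam K T c (monomial p 1) = minorParam K T c (monomial q 1))
    (g : V ⊕ (C ⊕ C) → K) {v : V ⊕ V} (hv : p v ≠ 0)
    (hg : aeval g (minorParam K T c (X v)) = 0) :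
    ∃ w, q w ≠ 0 ∧ aeval g (minorParam K T c (X w)) = 0 := by
  have h0 := (algHom_monomial_eq_zero_iff ((aeval g).comp (minorParam K T c)) p).2 ⟨v, hv, hg⟩
  rw [AlgHom.comp_apply, h, ← AlgHom.comp_apply] at h0
  exact (algHom_monomial_eq_zero_iff _ q).1 h0

/-- A variable dividing a monomial divides, modulo the `2`-minors, every monomial with the same
nonzero image under the parametrization. -/
lemma exists_sub_mul_X_mem {T : Set V} {c : V → C} {I : Ideal (MvPolynomial (V ⊕ V) K)}
    (hI : ∀ i j, i ∉ T → j ∉ T → c i = c j →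
      X (Sum.inl i) * X (Sum.inr j) - X (Sum.inl j) * X (Sum.inr i) ∈ I)
    {p q : V ⊕ V →₀ ℕ}
    (h : minorParam K T c (monomial p 1) = minorParam K T c (monomial q 1))
    (h0 : minorParam K T c (monomial p 1) ≠ 0) {v : V ⊕ V} (hv : p v ≠ 0) :
    ∃ r : V ⊕ V →₀ ℕ, monomial q 1 - monomial r 1 * X v ∈ I := by
  classical
  have hoff : ∀ w, q w ≠ 0 → Sum.elim id id w ∉ T := fun w hw hT =>
    h0 (h.trans ((algHom_monomial_eq_zero_iff _ q).2 ⟨w, hw, minorParam_X_of_mem c hT⟩))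
  have hvT : Sum.elim id id v ∉ T := fun hT =>
    h0 ((algHom_monomial_eq_zero_iff _ p).2 ⟨v, hv, minorParam_X_of_mem c hT⟩)
  by_cases hqv : q v ≠ 0
  · exact ⟨_, by rw [← monomial_eq_mul_X_of_ne_zero hqv, sub_self]; exact I.zero_mem⟩
  obtain ⟨w, hw, hw'⟩ := exists_eval_minorParam_eq_zero h
    (fun a => if a = Sum.inl (Sum.elim id id v) then 0 else 1) hv
    (by simp [minorParam_X_of_notMem c hvT])
  obtain ⟨u, hu, hu'⟩ := exists_eval_minorParam_eq_zero h
    (fun a => if a = Sum.inr (Sum.map c c v) then 0 else 1) hv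
    (by simp [minorParam_X_of_notMem c hvT])
  have hwT := hoff w hw
  have huT := hoff u hu
  simp only [minorParam_X_of_notMem c hwT, map_mul, aeval_X] at hw'
  simp only [minorParam_X_of_notMem c huT, map_mul, aeval_X] at hu'
  have hwv : w ≠ v := by rintro rfl; exact hqv hw
  have key : ∃ u', X u * X w - X u' * X v ∈ I := by
    rcases v with i | i <;> rcases w with k | k <;> rcases u with j | j <;>
      simp at hw' hu' hwv hvT huT
    · exact absurd hw' hwv
    · subst hw'
      exact ⟨Sum.inr j, by simpa [mul_comm] using hI j k huT hvT hu'⟩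
    · subst hw'
      refine ⟨Sum.inl j, ?_⟩
      have := hI k j hvT huT hu'.symm
      rwa [mul_comm (X (Sum.inr j))]
    · exact absurd hw' hwv
  obtain ⟨u', hu''⟩ := key
  have huw : u ≠ w := by
    rintro rfl
    rcases v with i | i <;> rcases u with k | k <;> simp_all
  have hw2 : (q - Finsupp.single u 1 : V ⊕ V →₀ ℕ) w ≠ 0 := by
    simpa [Finsupp.single_apply, huw] using hw
  refine ⟨q - Finsupp.single u 1 - Finsupp.single w 1 + Finsupp.single u' 1, ?_⟩
  have h1 : (monomial (q - Finsupp.single u 1 - Finsupp.single w 1 + Finsupp.single u' 1) 1 :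
      MvPolynomial (V ⊕ V) K) =
      monomial (q - Finsupp.single u 1 - Finsupp.single w 1) 1 * X u' := by
    rw [X, monomial_mul, one_mul]
  rw [h1, monomial_eq_mul_X_of_ne_zero hu, monomial_eq_mul_X_of_ne_zero hw2]
  convert I.mul_mem_left (monomial (q - Finsupp.single u 1 - Finsupp.single w 1) 1) hu'' using 1
  ring

/-- Monomials with the same nonzero image under the parametrization are congruent modulo the
`2`-minors. -/
lemma monomial_sub_monomial_mem {T : Set V} {c : V → C} {I : Ideal (MvPolynomial (V ⊕ V) K)}
    (hker : I ≤ RingHom.ker (minorParam K T c))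
    (hI : ∀ i j, i ∉ T → j ∉ T → c i = c j →
      X (Sum.inl i) * X (Sum.inr j) - X (Sum.inl j) * X (Sum.inr i) ∈ I)
    (p q : V ⊕ V →₀ ℕ)
    (h : minorParam K T c (monomial p 1) = minorParam K T c (monomial q 1))
    (h0 : minorParam K T c (monomial p 1) ≠ 0) :
    (monomial p 1 - monomial q 1 : MvPolynomial (V ⊕ V) K) ∈ I := by
  induction hN : p.degree generalizing p q with
  | zero =>
    obtain rfl : p = 0 := (Finsupp.degree_eq_zero_iff p).1 hN
    have hq : q = 0 := by
      by_contra hq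
      obtain ⟨v, hv⟩ := Finsupp.ne_iff.1 hq
      obtain ⟨w, hw, -⟩ := exists_eval_minorParam_eq_zero h.symm (fun _ => 0) hv (by
        by_cases hT : Sum.elim id id v ∈ T
        · simp [minorParam_X_of_mem c hT]
        · simp [minorParam_X_of_notMem c hT])
      exact hw rfl
    rw [hq, sub_self]
    exact I.zero_mem
  | succ N ih =>
    obtain ⟨v, hv⟩ : ∃ v, p v ≠ 0 := by
      by_contra! hp
      obtain rfl : p = 0 := Finsupp.ext hp
      simp at hN
    obtain ⟨r, hr⟩ := exists_sub_mul_X_mem hI h h0 hv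
    have hqr : minorParam K T c (monomial q 1) = minorParam K T c (monomial r 1 * X v) := by
      rw [← sub_eq_zero, ← map_sub]
      exact hker hr
    rw [monomial_eq_mul_X_of_ne_zero hv, map_mul] at h h0
    rw [hqr, map_mul] at h
    have hdeg : (p - Finsupp.single v 1).degree = N := by
      have hp : p = (p - Finsupp.single v 1) + Finsupp.single v 1 := by
        classical
        rw [tsub_add_cancel_of_le]
        simpa [Finsupp.single_le_iff] using Nat.one_le_iff_ne_zero.2 hv
      rw [hp, map_add] at hN
      simpa using hN
    have := ih _ r (mul_right_cancel₀ (right_ne_zero_of_mul h0) h) (left_ne_zero_of_mul h0) hdeg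
    have h2 := I.sub_mem (I.mul_mem_right (X v) this) hr
    rw [monomial_eq_mul_X_of_ne_zero hv]
    convert h2 using 1
    ring

/-- The kernel of the parametrization is generated by the variables indexed by `T` and the
`2`-minors. -/
theorem ker_minorParam_eq {T : Set V} {c : V → C} {I : Ideal (MvPolynomial (V ⊕ V) K)}
    (hker : I ≤ RingHom.ker (minorParam K T c))
    (hT : ∀ v, Sum.elim id id v ∈ T → X v ∈ I)
    (hI : ∀ i j, i ∉ T → j ∉ T → c i = c j →
      X (Sum.inl i) * X (Sum.inr j) - X (Sum.inl j) * X (Sum.inr i) ∈ I) :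
    RingHom.ker (minorParam K T c) = I := by
  classical
  refine le_antisymm (fun f hf => ?_) hker
  let s : MvPolynomial (V ⊕ (C ⊕ C)) K →ₗ[K] MvPolynomial (V ⊕ V) K ⧸ I :=
    (basisMonomials _ K).constr K fun d =>
      if h : ∃ p, minorParam K T c (monomial p 1) = monomial d 1 then
        Ideal.Quotient.mk I (monomial h.choose 1) else 0
  have hs : s ∘ₗ (minorParam K T c).toLinearMap = (Ideal.Quotient.mkₐ K I).toLinearMap := by
    refine (basisMonomials _ K).ext fun p => ?_
    simp only [coe_basisMonomials, LinearMap.comp_apply, AlgHom.toLinearMap_apply,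
      Ideal.Quotient.mkₐ_eq_mk]
    rcases minorParam_monomial (K := K) T c p with h | ⟨d, hd⟩
    · obtain ⟨v, hv, hv'⟩ := (algHom_monomial_eq_zero_iff _ p).1 h
      rw [h, map_zero, eq_comm, Ideal.Quotient.eq_zero_iff_mem, monomial_eq_mul_X_of_ne_zero hv]
      exact I.mul_mem_left _ (hT v (minorParam_X_eq_zero_iff.1 hv'))
    · have hex : ∃ p, minorParam K T c (monomial p 1) = monomial d 1 := ⟨p, hd⟩
      have hsd : s (monomial d 1) = Ideal.Quotient.mk I (monomial hex.choose 1) := by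
        have := (basisMonomials (V ⊕ (C ⊕ C)) K).constr_basis K (fun d =>
          if h : ∃ p, minorParam K T c (monomial p 1) = monomial d 1 then
            Ideal.Quotient.mk I (monomial h.choose 1) else 0) d
        rw [coe_basisMonomials, dif_pos hex] at this
        exact this
      rw [hd, hsd, Ideal.Quotient.eq]
      refine monomial_sub_monomial_mem hker hI _ _ (hex.choose_spec.trans hd.symm) ?_
      rw [hex.choose_spec]
      simp
  have := LinearMap.congr_fun hs f
  simp only [LinearMap.comp_apply, AlgHom.toLinearMap_apply, Ideal.Quotient.mkₐ_eq_mk] at this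
  rw [RingHom.mem_ker] at hf
  rw [hf, map_zero] at this
  exact Ideal.Quotient.eq_zero_iff_mem.1 this.symm

end Toric

section Graph

variable {n : ℕ} (G : SimpleGraph (Fin n))

open Classical in
/-- The connected component of a vertex of the subgraph induced on the complement of `T`, and
`none` for the vertices in `T`. -/
def compAvoiding (T : Set (Fin n)) (i : Fin n) : Option (G.induce Tᶜ).ConnectedComponent :=
  if h : i ∈ Tᶜ then some ((G.induce Tᶜ).connectedComponentMk ⟨i, h⟩) else none

variable {G}

lemma compAvoiding_eq_iff {T : Set (Fin n)} {i j : Fin n} (hi : i ∈ Tᶜ) (hj : j ∈ Tᶜ) :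
    compAvoiding G T i = compAvoiding G T j ↔ (G.induce Tᶜ).Reachable ⟨i, hi⟩ ⟨j, hj⟩ := by
  simp only [compAvoiding, dif_pos hi, dif_pos hj, Option.some.injEq,
    SimpleGraph.ConnectedComponent.eq]

lemma reachable_induce_mono {U W : Set (Fin n)} (h : U ⊆ W) {j k : Fin n} {hj : j ∈ U}
    {hk : k ∈ U} (hr : (G.induce U).Reachable ⟨j, hj⟩ ⟨k, hk⟩) :
    (G.induce W).Reachable ⟨j, h hj⟩ ⟨k, h hk⟩ :=
  hr.map (G.induceHomOfLE h).toHom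

/-- Adding a vertex `i` to `U` lowers the number of components iff it connects two vertices in
different components of the subgraph induced on `U`. -/
lemma cNum_union_singleton_lt_iff {U : Set (Fin n)} {i : Fin n} :
    cNum G (U ∪ {i}) < cNum G U ↔ ∃ (j k : Fin n) (hj : j ∈ U) (hk : k ∈ U),
      (G.induce (U ∪ {i})).Reachable ⟨j, Or.inl hj⟩ ⟨k, Or.inl hk⟩ ∧
        ¬ (G.induce U).Reachable ⟨j, hj⟩ ⟨k, hk⟩ := by
  let π : (G.induce U).ConnectedComponent → (G.induce (U ∪ {i})).ConnectedComponent :=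
    SimpleGraph.ConnectedComponent.map (G.induceHomOfLE Set.subset_union_left).toHom
  constructor
  · intro hlt
    by_contra! hcon
    refine hlt.not_ge (Nat.card_le_card_of_injective π ?_)
    intro a b
    induction a using SimpleGraph.ConnectedComponent.ind with | _ a
    induction b using SimpleGraph.ConnectedComponent.ind with | _ b
    intro hab
    exact SimpleGraph.ConnectedComponent.sound
      (hcon a b a.2 b.2 (SimpleGraph.ConnectedComponent.exact hab))
  · rintro ⟨j, k, hj, hk, hr, hnr⟩
    have hnb : ∃ u ∈ U, G.Adj u i := by
      by_contra! hnb
      have step : ∀ w, (G.induce (U ∪ {i})).Reachable ⟨j, Or.inl hj⟩ w →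
          ∃ hw : w.1 ∈ U, (G.induce U).Reachable ⟨j, hj⟩ ⟨w.1, hw⟩ := by
        intro w hw
        rw [SimpleGraph.reachable_iff_reflTransGen] at hw
        induction hw with
        | refl => exact ⟨hj, .rfl⟩
        | @tail b w _ hbw ih =>
          obtain ⟨hb, hjb⟩ := ih
          have hbw' : G.Adj b.1 w.1 := hbw
          rcases w.2 with hw | hw
          · exact ⟨hw, hjb.trans (SimpleGraph.Adj.reachable (G := G.induce U) (u := ⟨b.1, hb⟩)
              (v := ⟨w.1, hw⟩) hbw')⟩
          · rw [Set.mem_singleton_iff.1 hw] at hbw'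
            exact absurd hbw' (hnb _ hb)
      exact hnr (step _ hr).2
    obtain ⟨u, hu, hui⟩ := hnb
    have hsurj : Function.Surjective π := by
      intro a
      induction a using SimpleGraph.ConnectedComponent.ind with | _ a
      obtain ⟨a, ha | ha⟩ := a
      · exact ⟨(G.induce U).connectedComponentMk ⟨a, ha⟩, rfl⟩
      · obtain rfl := Set.mem_singleton_iff.1 ha
        refine ⟨(G.induce U).connectedComponentMk ⟨u, hu⟩, ?_⟩
        exact SimpleGraph.ConnectedComponent.sound
          (SimpleGraph.Adj.reachable (G := G.induce (U ∪ {a})) (u := ⟨u, Or.inl hu⟩)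
            (v := ⟨a, Or.inr ha⟩) hui)
    refine lt_of_le_of_ne (Nat.card_le_card_of_surjective π hsurj) fun heq => hnr ?_
    have hbij := (Nat.bijective_iff_surjective_and_card π).2 ⟨hsurj, heq.symm⟩
    exact SimpleGraph.ConnectedComponent.exact
      (hbij.1 (SimpleGraph.ConnectedComponent.sound hr))

end Graph

section Ideals

variable {K : Type*} [Field K] {n : ℕ} {G : SimpleGraph (Fin n)}

lemma X_mem_PTIdeal {T : Set (Fin n)} {v : Fin n ⊕ Fin n} (hv : Sum.elim id id v ∈ T) :
    X v ∈ PTIdeal K G T := by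
  rcases v with i | i
  · exact Ideal.subset_span (Or.inl (Or.inl ⟨i, hv, rfl⟩))
  · exact Ideal.subset_span (Or.inl (Or.inr ⟨i, hv, rfl⟩))

lemma minor_mem_PTIdeal_of_reachable {T : Set (Fin n)} {i j : Fin n} {hi : i ∈ Tᶜ} {hj : j ∈ Tᶜ}
    (h : (G.induce Tᶜ).Reachable ⟨i, hi⟩ ⟨j, hj⟩) :
    X (Sum.inl i) * X (Sum.inr j) - X (Sum.inl j) * X (Sum.inr i) ∈ PTIdeal K G T := by
  by_cases hij : i = j
  · subst hij
    rw [sub_self]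
    exact Ideal.zero_mem _
  · exact Ideal.subset_span (Or.inr ⟨i, j, hi, hj, hij, h, rfl⟩)

lemma minor_mem_of_left {I : Ideal (MvPolynomial (Fin n ⊕ Fin n) K)} {i j : Fin n}
    (hx : X (Sum.inl i) ∈ I) (hy : X (Sum.inr i) ∈ I) :
    X (Sum.inl i) * X (Sum.inr j) - X (Sum.inl j) * X (Sum.inr i) ∈ I :=
  I.sub_mem (I.mul_mem_right _ hx) (I.mul_mem_left _ hy)

lemma minor_mem_of_right {I : Ideal (MvPolynomial (Fin n ⊕ Fin n) K)} {i j : Fin n}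
    (hx : X (Sum.inl j) ∈ I) (hy : X (Sum.inr j) ∈ I) :
    X (Sum.inl i) * X (Sum.inr j) - X (Sum.inl j) * X (Sum.inr i) ∈ I :=
  I.sub_mem (I.mul_mem_left _ hy) (I.mul_mem_right _ hx)

lemma PTIdeal_le_iff {T : Set (Fin n)} {I : Ideal (MvPolynomial (Fin n ⊕ Fin n) K)} :
    PTIdeal K G T ≤ I ↔ (∀ v, Sum.elim id id v ∈ T → X v ∈ I) ∧
      ∀ (i j : Fin n) (hi : i ∈ Tᶜ) (hj : j ∈ Tᶜ), (G.induce Tᶜ).Reachable ⟨i, hi⟩ ⟨j, hj⟩ →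
        X (Sum.inl i) * X (Sum.inr j) - X (Sum.inl j) * X (Sum.inr i) ∈ I := by
  refine ⟨fun h => ⟨fun v hv => h (X_mem_PTIdeal hv),
    fun i j hi hj hr => h (minor_mem_PTIdeal_of_reachable hr)⟩, ?_⟩
  rintro ⟨hT, hI⟩
  refine Ideal.span_le.2 ?_
  rintro f ((⟨i, hi, rfl⟩ | ⟨i, hi, rfl⟩) | ⟨i, j, hi, hj, -, hr, rfl⟩)
  · exact hT (Sum.inl i) hi
  · exact hT (Sum.inr i) hi
  · exact hI i j hi hj hr

variable (K G) in
lemma PTIdeal_eq_ker (T : Set (Fin n)) :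
    PTIdeal K G T = RingHom.ker (minorParam K T (compAvoiding G T)) := by
  refine (ker_minorParam_eq (PTIdeal_le_iff.2 ⟨fun v hv => ?_, fun i j hi hj hr => ?_⟩)
    (fun v hv => X_mem_PTIdeal hv) fun i j hi hj hc => ?_).symm
  · exact minorParam_X_of_mem _ hv
  · exact (minorParam_minor_eq_zero_iff hi hj).2 ((compAvoiding_eq_iff hi hj).2 hr)
  · exact minor_mem_PTIdeal_of_reachable ((compAvoiding_eq_iff hi hj).1 hc)

variable (K G) in
theorem PTIdeal_isPrime (T : Set (Fin n)) : (PTIdeal K G T).IsPrime := by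
  rw [PTIdeal_eq_ker]
  exact RingHom.ker_isPrime _

lemma X_mem_PTIdeal_iff {T : Set (Fin n)} {v : Fin n ⊕ Fin n} :
    X v ∈ PTIdeal K G T ↔ Sum.elim id id v ∈ T := by
  rw [PTIdeal_eq_ker, RingHom.mem_ker]
  exact minorParam_X_eq_zero_iff

lemma minor_mem_PTIdeal_iff {T : Set (Fin n)} {i j : Fin n} (hi : i ∈ Tᶜ) (hj : j ∈ Tᶜ) :
    X (Sum.inl i) * X (Sum.inr j) - X (Sum.inl j) * X (Sum.inr i) ∈ PTIdeal K G T ↔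
      (G.induce Tᶜ).Reachable ⟨i, hi⟩ ⟨j, hj⟩ := by
  rw [PTIdeal_eq_ker, RingHom.mem_ker, ← compAvoiding_eq_iff hi hj]
  exact minorParam_minor_eq_zero_iff hi hj

variable (K G) in
lemma binomialEdgeIdeal_le_PTIdeal (T : Set (Fin n)) :
    binomialEdgeIdeal K G ≤ PTIdeal K G T := by
  refine Ideal.span_le.2 ?_
  rintro f ⟨i, j, hij, rfl⟩
  by_cases hi : i ∈ T
  · exact minor_mem_of_left (X_mem_PTIdeal hi) (X_mem_PTIdeal hi)
  by_cases hj : j ∈ T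
  · exact minor_mem_of_right (X_mem_PTIdeal hj) (X_mem_PTIdeal hj)
  exact minor_mem_PTIdeal_of_reachable (SimpleGraph.Adj.reachable (G := G.induce Tᶜ)
    (u := ⟨i, hi⟩) (v := ⟨j, hj⟩) hij)

/-- A prime containing `J_G` contains `P_T(G)`, where `T` is the set of vertices both of whose
variables lie in the prime. -/
lemma PTIdeal_le_of_isPrime {Q : Ideal (MvPolynomial (Fin n ⊕ Fin n) K)} (hQ : Q.IsPrime)
    (hJ : binomialEdgeIdeal K G ≤ Q) :
    PTIdeal K G {i | X (Sum.inl i) ∈ Q ∧ X (Sum.inr i) ∈ Q} ≤ Q := by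
  refine PTIdeal_le_iff.2 ⟨?_, fun i j hi hj hr => ?_⟩
  · rintro (i | i) hi
    · exact hi.1
    · exact hi.2
  rw [SimpleGraph.reachable_iff_reflTransGen] at hr
  have aux : ∀ w : ({i | X (Sum.inl i) ∈ Q ∧ X (Sum.inr i) ∈ Q}ᶜ : Set (Fin n)),
      Relation.ReflTransGen (G.induce _).Adj ⟨i, hi⟩ w →
      X (Sum.inl i) * X (Sum.inr w.1) - X (Sum.inl w.1) * X (Sum.inr i) ∈ Q := by
    intro w hw
    induction hw with
    | refl => rw [sub_self]; exact Q.zero_mem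
    | @tail b w _ hbw ih =>
      have hf : X (Sum.inl b.1) * X (Sum.inr w.1) - X (Sum.inl w.1) * X (Sum.inr b.1) ∈ Q :=
        hJ (Ideal.subset_span ⟨b, w, hbw, rfl⟩)
      by_contra hne
      refine b.2 ⟨(hQ.mem_or_mem (y := X (Sum.inl i) * X (Sum.inr w.1) -
          X (Sum.inl w.1) * X (Sum.inr i)) ?_).resolve_right hne,
        (hQ.mem_or_mem (y := X (Sum.inl i) * X (Sum.inr w.1) -
          X (Sum.inl w.1) * X (Sum.inr i)) ?_).resolve_right hne⟩
      · convert Q.add_mem (Q.mul_mem_left (X (Sum.inl i)) hf)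
          (Q.mul_mem_left (X (Sum.inl w.1)) ih) using 1
        ring
      · convert Q.add_mem (Q.mul_mem_left (X (Sum.inr i)) hf)
          (Q.mul_mem_left (X (Sum.inr w.1)) ih) using 1
        ring
  exact aux ⟨j, hj⟩ hr

end Ideals

/-- For `T ⊆ [n]`, the prime `P_T(G)` is a minimal prime of `J_G`
if and only if `T` has the cutpoint property for `G`. -/
theorem PTIdeal_mem_minimalPrimes_iff (K : Type*) [Field K] (n : ℕ)
    (G : SimpleGraph (Fin n)) (T : Set (Fin n)) :
    PTIdeal K G T ∈ (binomialEdgeIdeal K G).minimalPrimes ↔ HasCutpointProperty G T := by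
  constructor
  · intro hmin i hi
    rw [cNum_union_singleton_lt_iff]
    by_contra! hcon
    have hcompl : (T \ {i})ᶜ = Tᶜ ∪ {i} := by
      rw [Set.sdiff_eq, Set.compl_inter, compl_compl]
    have hle : PTIdeal K G (T \ {i}) ≤ PTIdeal K G T := by
      refine PTIdeal_le_iff.2 ⟨fun v hv => X_mem_PTIdeal hv.1, fun j k hj hk hr => ?_⟩
      by_cases hjT : j ∈ T
      · exact minor_mem_of_left (X_mem_PTIdeal hjT) (X_mem_PTIdeal hjT)
      by_cases hkT : k ∈ T
      · exact minor_mem_of_right (X_mem_PTIdeal hkT) (X_mem_PTIdeal hkT)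
      exact minor_mem_PTIdeal_of_reachable
        (hcon j k hjT hkT (reachable_induce_mono hcompl.le hr))
    have hge : PTIdeal K G T ≤ PTIdeal K G (T \ {i}) :=
      hmin.2 ⟨PTIdeal_isPrime K G _, binomialEdgeIdeal_le_PTIdeal K G _⟩ hle
    have := X_mem_PTIdeal_iff.1 (hge (X_mem_PTIdeal (v := Sum.inl i) hi))
    exact this.2 rfl
  · intro hcut
    refine ⟨⟨PTIdeal_isPrime K G T, binomialEdgeIdeal_le_PTIdeal K G T⟩, ?_⟩
    rintro Q ⟨hQ, hJ⟩ hle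
    have hPQ := PTIdeal_le_of_isPrime hQ hJ
    set T' : Set (Fin n) := {i | X (Sum.inl i) ∈ Q ∧ X (Sum.inr i) ∈ Q}
    have hT'T : T' ⊆ T := fun i hi => X_mem_PTIdeal_iff.1 (hle hi.1)
    have hTT' : T ⊆ T' := by
      intro i hi
      by_contra hi'
      obtain ⟨j, k, hj, hk, hr, hnr⟩ := cNum_union_singleton_lt_iff.1 (hcut i hi)
      have hsub : Tᶜ ∪ {i} ⊆ T'ᶜ :=
        Set.union_subset (Set.compl_subset_compl.2 hT'T) (Set.singleton_subset_iff.2 hi')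
      exact hnr ((minor_mem_PTIdeal_iff hj hk).1 (hle (hPQ
        (minor_mem_PTIdeal_of_reachable (reachable_induce_mono hsub hr)))))
    rwa [hT'T.antisymm hTT'] at hPQ

end
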